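/- Let n ≥ 2, 2 ≤ p ≤ ∞, let γ : I → ℝⁿ be a smooth, injective, regular, non-degenerate curve on a compact interval I, and let χ ∈ C_c^∞(ℝ) be nonnegative, not identically zero, and supported in the interior of I. Then there exists c > 0 (depending on p, γ, χ) such that for every λ ≥ 1 there exists a nonzero Schwartz function f on ℝⁿ belonging to Z_λ with ‖A_γ f‖_{L^p(ℝⁿ)} ≥ c λ^{−(1/n)(1/2 + 1/p)} ‖f‖_{L^p(ℝⁿ)}. -/

import Mathlib

open MeasureTheory Set
open scoped FourierTransform RealInnerProductSpace ENNReal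

noncomputable section

/-- Euclidean space ℝⁿ. -/
abbrev Euc (n : ℕ) := EuclideanSpace ℝ (Fin n)

/-- The averaging operator `A_γ f (x) = ∫ f(x - γ(s)) χ(s) ds`. -/
def avgOp {n : ℕ} (γ : ℝ → Euc n) (χ : ℝ → ℝ) (f : Euc n → ℂ) : Euc n → ℂ :=
  fun x => ∫ s : ℝ, f (x - γ s) * (χ s : ℂ)

/-- The `L^p` Sobolev norm `‖𝓕⁻¹[(1+|ξ|²)^{α/2} 𝓕 g]‖_{L^p}` of order `α`. -/
def sobolevNorm {n : ℕ} (p : ℝ≥0∞) (α : ℝ) (g : Euc n → ℂ) : ℝ≥0∞ :=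
  eLpNorm (𝓕⁻ (fun ξ : Euc n => (((1 + ‖ξ‖ ^ 2) ^ (α / 2) : ℝ) : ℂ) * 𝓕 g ξ)) p volume

/-- Non-degeneracy: `|det(γ'(s), …, γ⁽ⁿ⁾(s))| ≥ c₀ > 0` on `I`. -/
def NonDeg {n : ℕ} (γ : ℝ → Euc n) (I : Set ℝ) : Prop :=
  ∃ c₀ > (0 : ℝ), ∀ s ∈ I,
    c₀ ≤ |(Matrix.of fun i j : Fin n => iteratedDeriv ((j : ℕ) + 1) γ s i).det|

open scoped ContDiff Convolution SchwartzMap Topology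

lemma exists_bump (n : ℕ) : ∃ (S : 𝓢(Euc n, ℂ)) (φ : Euc n → ℝ),
    (∀ x, (𝓕⁻ S) x = (φ x : ℂ)) ∧ (∀ x, 0 ≤ φ x) ∧ 0 < φ 0 ∧ (∀ ξ, 1 ≤ ‖ξ‖ → S ξ = 0) := by
  let b : ContDiffBump (0 : Euc n) := ⟨1/4, 1/2, by norm_num, by norm_num⟩
  have hbs : HasCompactSupport (fun x => ((b x : ℝ) : ℂ)) :=
    b.hasCompactSupport.comp_left (g := fun r : ℝ => (r : ℂ)) (by simp)
  have hbd : ContDiff ℝ ∞ (fun x => ((b x : ℝ) : ℂ)) :=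
    Complex.ofRealCLM.contDiff.comp b.contDiff
  let ψ : 𝓢(Euc n, ℂ) := hbs.toSchwartzMap hbd
  have hψ : ∀ x, ψ x = (b x : ℂ) := fun x => rfl
  let B : ℂ →L[ℂ] ℂ →L[ℂ] ℂ := ContinuousLinearMap.mul ℂ ℂ
  let S := SchwartzMap.convolution B ψ ψ
  have hreal : ∀ x, ((starRingEnd ℂ) (𝓕 ψ x)) = 𝓕 ψ x := by
    intro x
    rw [SchwartzMap.fourier_coe, Real.fourier_eq', ← integral_conj]
    rw [← integral_neg_eq_self]
    congr 1
    ext v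
    simp only [hψ, smul_eq_mul, map_mul, ← Complex.exp_conj, Complex.conj_ofReal, Complex.conj_I, b.neg,
      inner_neg_left]
    simp 
  refine ⟨S, fun x => ((𝓕 ψ (-x)).re) ^ 2, ?_, fun x => sq_nonneg _, ?_, ?_⟩
  · intro x
    rw [SchwartzMap.fourierInv_apply_eq]
    have h2 := SchwartzMap.fourier_convolution B ψ ψ
    have : 𝓕 S (-x) = 𝓕 ψ (-x) * 𝓕 ψ (-x) := by
      rw [show 𝓕 S = _ from h2]
      rfl
    have h3 := Complex.conj_eq_iff_re.mp (hreal (-x))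
    simp only [Function.comp, SchwartzMap.compCLMOfContinuousLinearEquiv_apply]
    have h4 : 𝓕 S (-x) = _ := this
    refine Eq.trans ?_ (h4.trans ?_)
    · rfl
    · rw [← h3]; push_cast; simp; ring
  · have : 𝓕 ψ (-0) = ((∫ x, b x : ℝ) : ℂ) := by
      rw [SchwartzMap.fourier_coe, Real.fourier_eq', ← integral_complex_ofReal]
      simp [hψ]
    show 0 < ((𝓕 ψ (-0)).re) ^ 2
    rw [this]
    have := b.integral_pos (μ := volume)
    simp only [Complex.ofReal_re]
    positivity
  · intro ξ hξ
    show SchwartzMap.convolution B ψ ψ ξ = 0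
    rw [SchwartzMap.convolution_apply]
    rw [convolution_def]
    apply integral_eq_zero_of_ae
    filter_upwards with t
    by_cases ht : ‖t‖ < 1/2
    · have : ψ (ξ - t) = 0 := by
        rw [hψ, b.zero_of_le_dist]
        · simp
        · rw [dist_zero_right]
          have := norm_sub_norm_le ξ t
          show (1/2 : ℝ) ≤ _
          linarith
      simp [this]
    · have : ψ t = 0 := by
        rw [hψ, b.zero_of_le_dist]
        · simp
        · rw [dist_zero_right]
          exact not_lt.mp ht
      simp [this]

lemma exists_mod {n : ℕ} (S : 𝓢(Euc n, ℂ)) (φ : Euc n → ℝ)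
    (hφ : ∀ x, (𝓕⁻ S) x = (φ x : ℂ)) (hS : ∀ ξ, 1 ≤ ‖ξ‖ → S ξ = 0)
    (ρ : ℝ) (hρ : 0 < ρ) (ξ₀ v : Euc n) :
    ∃ f : 𝓢(Euc n, ℂ),
      (∀ x, f x = Complex.exp (((2 * Real.pi * ⟪ξ₀, x + v⟫ : ℝ) : ℂ) * Complex.I) * (φ (ρ • (x + v)) : ℂ)) ∧
      (∀ ξ, ρ < ‖ξ - ξ₀‖ → 𝓕 (⇑f) ξ = 0) := by
  let F : Euc n → ℂ := fun ξ => Complex.exp (((2 * Real.pi * ⟪ξ, v⟫ : ℝ) : ℂ) * Complex.I) * S (ρ⁻¹ • (ξ - ξ₀))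
  have hF0 : ∀ ξ, ρ < ‖ξ - ξ₀‖ → F ξ = 0 := by
    intro ξ h
    have : S (ρ⁻¹ • (ξ - ξ₀)) = 0 := by
      apply hS
      rw [norm_smul, norm_inv, Real.norm_of_nonneg hρ.le, inv_mul_eq_div, one_le_div hρ]
      exact h.le
    simp [F, this]
  have hFc : HasCompactSupport F := by
    apply HasCompactSupport.of_support_subset_isCompact (isCompact_closedBall ξ₀ ρ)
    intro ξ h
    by_contra h'
    apply h
    apply hF0
    simpa [dist_eq_norm] using h'
  have hFd : ContDiff ℝ ∞ F := by
    apply ContDiff.mul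
    · apply ContDiff.cexp
      apply ContDiff.mul _ contDiff_const
      apply Complex.ofRealCLM.contDiff.comp
      exact contDiff_const.mul (contDiff_id.inner ℝ contDiff_const)
    · exact (S.smooth ⊤).comp (by fun_prop)
  let G : 𝓢(Euc n, ℂ) := hFc.toSchwartzMap hFd
  have hG : ∀ ξ, G ξ = F ξ := fun _ => rfl
  refine ⟨((ρ ^ n)⁻¹ : ℂ) • 𝓕⁻ G, ?_, ?_⟩
  · intro x
    rw [smul_apply, SchwartzMap.fourierInv_coe, Real.fourierInv_eq']
    have h1 := hφ (ρ • (x + v))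
    rw [SchwartzMap.fourierInv_coe, Real.fourierInv_eq'] at h1
    rw [← h1]
    have h2 : ∀ g : Euc n → ℂ, ∫ ξ, g ξ = (ρ ^ n : ℂ) * ∫ ξ, g (ξ₀ + ρ • ξ) := by
      intro g
      have := Measure.integral_comp_smul volume (fun ξ => g (ξ₀ + ξ)) ρ
      rw [this, integral_add_left_eq_self]
      simp only [finrank_euclideanSpace, Fintype.card_fin, abs_inv, abs_pow, abs_of_pos hρ]
      rw [Complex.real_smul, ← mul_assoc]
      push_cast
      rw [mul_inv_cancel₀, one_mul]
      exact pow_ne_zero _ (by exact_mod_cast hρ.ne')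
    rw [h2, smul_eq_mul, ← mul_assoc, inv_mul_cancel₀ (pow_ne_zero _ (by exact_mod_cast hρ.ne')), one_mul,
      ← integral_const_mul]
    congr 1
    ext ξ
    simp only [hG, F, smul_eq_mul]
    rw [add_sub_cancel_left, smul_smul, inv_mul_cancel₀ hρ.ne', one_smul, ← mul_assoc, ← mul_assoc,
      ← Complex.exp_add, ← Complex.exp_add]
    congr 2
    simp only [inner_add_left, inner_add_right, inner_smul_left, inner_smul_right]
    push_cast
    simp
    ring
  · intro ξ h
    rw [← SchwartzMap.fourier_coe, FourierTransform.fourier_smul]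
    simp [hG, hF0 ξ h]

lemma taylor_bd (a b : ℝ) (M : ℝ) (s₀ : ℝ) (hs₀ : s₀ ∈ Icc a b) (n : ℕ) : ∀ (g : ℝ → ℝ), ContDiff ℝ ∞ g →
    (∀ j < n, iteratedDeriv j g s₀ = 0) → (∀ s ∈ Icc a b, |iteratedDeriv n g s| ≤ M) →
    ∀ s ∈ Icc a b, |g s| ≤ M * |s - s₀| ^ n := by
  induction n with
  | zero => intro g _ _ h s hs; simpa using h s hs
  | succ n ih =>
    intro g hg h0 hM s hs
    have hg' : ContDiff ℝ ∞ (deriv g) := ((contDiff_infty_iff_deriv (f := g)).mp hg).2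
    have h1 := ih (deriv g) hg' (fun j hj => by
      have := h0 (j+1) (by omega); rwa [iteratedDeriv_succ'] at this) (fun t ht => by
      have := hM t ht; rwa [iteratedDeriv_succ'] at this)
    have hM0 : 0 ≤ M := (abs_nonneg _).trans (hM s hs)
    have h2 := Convex.norm_image_sub_le_of_norm_deriv_le (𝕜 := ℝ) (f := g) (s := uIcc s₀ s) (x := s₀) (y := s)
      (C := M * |s - s₀| ^ n) (fun x _ => (hg.differentiable (by simp)) x) (fun x hx => by
        rw [Real.norm_eq_abs]
        refine (h1 x (uIcc_subset_Icc hs₀ hs hx)).trans ?_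
        have := abs_sub_left_of_mem_uIcc hx
        gcongr) (convex_uIcc _ _) left_mem_uIcc right_mem_uIcc
    have h00 := h0 0 (by omega)
    rw [iteratedDeriv_zero] at h00
    rw [h00, sub_zero, Real.norm_eq_abs, Real.norm_eq_abs] at h2
    rw [pow_succ, ← mul_assoc]; exact h2

lemma bilip {n : ℕ} (a b : ℝ) (hab : a < b)
    (γ : ℝ → Euc n) (hγ : ContDiff ℝ (⊤ : ℕ∞) γ)
    (hinj : Set.InjOn γ (Set.Icc a b))
    (hreg : ∀ s ∈ Set.Icc a b, deriv γ s ≠ 0) :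
    ∃ c > 0, ∀ s ∈ Icc a b, ∀ t ∈ Icc a b, c * |s - t| ≤ ‖γ s - γ t‖ := by
  have hK : IsCompact (Icc a b ×ˢ Icc a b) := isCompact_Icc.prod isCompact_Icc
  have key : ∃ c > 0, ∀ q ∈ Icc a b ×ˢ Icc a b, c * |q.1 - q.2| ≤ ‖γ q.1 - γ q.2‖ := by
    refine hK.induction_on (p := fun S => ∃ c > 0, ∀ q ∈ S, c * |q.1 - q.2| ≤ ‖γ q.1 - γ q.2‖)
      ⟨1, one_pos, by simp⟩ ?_ ?_ ?_
    · rintro S T hST ⟨c, hc, h⟩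
      exact ⟨c, hc, fun q hq => h q (hST hq)⟩
    · rintro S T ⟨c, hc, h⟩ ⟨d, hd, h'⟩
      refine ⟨min c d, lt_min hc hd, ?_⟩
      rintro q (hq | hq)
      · exact le_trans (by gcongr; exact min_le_left _ _) (h q hq)
      · exact le_trans (by gcongr; exact min_le_right _ _) (h' q hq)
    · rintro ⟨s, t⟩ ⟨hs, ht⟩
      simp only at hs ht
      by_cases hst : s = t
      · subst hst
        have hd : HasStrictDerivAt γ (deriv γ s) s :=
          (hγ.contDiffAt.hasStrictDerivAt (by simp))
        have hpos : 0 < ‖deriv γ s‖ := norm_pos_iff.mpr (hreg s hs)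
        have h1 := (hasStrictDerivAt_iff_hasStrictFDerivAt.mp hd).isLittleO.def (half_pos hpos)
        refine ⟨_, mem_nhdsWithin_of_mem_nhds h1, ‖deriv γ s‖ / 2, half_pos hpos, ?_⟩
        rintro ⟨x, y⟩ hq
        simp only [mem_ofPred_eq] at hq ⊢
        have h2 : ‖(x - y) • deriv γ s‖ = |x - y| * ‖deriv γ s‖ := by rw [norm_smul, Real.norm_eq_abs]
        have h3 := norm_sub_norm_le ((x - y) • deriv γ s) (γ x - γ y)
        rw [norm_sub_rev ((x - y) • deriv γ s)] at h3
        simp at hq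
        nlinarith
      · have hne : γ s ≠ γ t := fun h => hst (hinj hs ht h)
        have hpos : 0 < ‖γ s - γ t‖ := norm_pos_iff.mpr (sub_ne_zero.mpr hne)
        have hc : Continuous (fun q : ℝ × ℝ => ‖γ q.1 - γ q.2‖) :=
          ((hγ.continuous.comp continuous_fst).sub (hγ.continuous.comp continuous_snd)).norm
        have h1 : ∀ᶠ q in 𝓝[Icc a b ×ˢ Icc a b] (s, t), ‖γ s - γ t‖ / 2 < ‖γ q.1 - γ q.2‖ :=
          Filter.Eventually.filter_mono nhdsWithin_le_nhds
            ((hc.tendsto (s, t)).eventually_const_lt (half_lt_self hpos))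
        refine ⟨_, Filter.inter_mem h1 self_mem_nhdsWithin, ‖γ s - γ t‖ / 2 / (b - a), by have := sub_pos.mpr hab; positivity, ?_⟩
        rintro ⟨x, y⟩ ⟨hq, hx, hy⟩
        simp only [mem_ofPred_eq, mem_Icc] at hq hx hy ⊢
        refine le_trans ?_ hq.le
        have : |x - y| ≤ b - a := by rw [abs_le]; constructor <;> linarith
        rw [div_mul_eq_mul_div, div_le_iff₀ (sub_pos.mpr hab)]
        gcongr
  obtain ⟨c, hc, h⟩ := key
  exact ⟨c, hc, fun s hs t ht => h (s, t) ⟨hs, ht⟩⟩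

lemma uplip {n : ℕ} (a b : ℝ) 
    (γ : ℝ → Euc n) (hγ : ContDiff ℝ (⊤ : ℕ∞) γ) :
    ∃ C > 0, ∀ s ∈ Icc a b, ∀ t ∈ Icc a b, ‖γ s - γ t‖ ≤ C * |s - t| := by
  have hc : Continuous (deriv γ) := hγ.continuous_deriv (by simp)
  obtain ⟨C, hC⟩ := (isCompact_Icc (a := a) (b := b)).exists_bound_of_continuousOn hc.continuousOn
  refine ⟨max C 1, by positivity, fun s hs t ht => ?_⟩
  have := Convex.norm_image_sub_le_of_norm_deriv_le (𝕜 := ℝ) (f := γ) (s := Icc a b) (x := t) (y := s)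
    (C := max C 1) (fun x _ => (hγ.differentiable (by simp)) x) 
    (fun x hx => (hC x hx).trans (le_max_left _ _)) (convex_Icc _ _) ht hs
  simpa using this

lemma exists_normal {n : ℕ} (hn : 2 ≤ n) (w : ℕ → Euc n) :
    ∃ e : Euc n, ‖e‖ = 1 ∧ ∀ j < n - 1, ⟪w j, e⟫ = 0 := by
  let V := Submodule.span ℝ (Set.range (fun j : Fin (n - 1) => w j))
  have h1 : Module.finrank ℝ V ≤ n - 1 := by
    have := finrank_range_le_card (R := ℝ) (fun j : Fin (n - 1) => w j)
    simpa [Set.finrank] using this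
  have h2 := V.finrank_add_finrank_orthogonal
  have h3 : Vᗮ ≠ ⊥ := by
    intro h
    rw [h, finrank_bot] at h2
    simp at h2
    omega
  obtain ⟨x, hx, hx0⟩ := Submodule.exists_mem_ne_zero_of_ne_bot h3
  refine ⟨‖x‖⁻¹ • x, norm_smul_inv_norm hx0, fun j hj => ?_⟩
  rw [inner_smul_right]
  rw [(Submodule.mem_orthogonal V x).mp hx (w j) (Submodule.subset_span ⟨⟨j, hj⟩, rfl⟩), mul_zero]

lemma phase_bd {n : ℕ} (hn : 2 ≤ n) (a b : ℝ)
    (γ : ℝ → Euc n) (hγ : ContDiff ℝ (⊤ : ℕ∞) γ) :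
    ∃ M > 0, ∀ s₀ ∈ Icc a b, ∃ e : Euc n, ‖e‖ = 1 ∧ ∀ s ∈ Icc a b, |⟪e, γ s - γ s₀⟫| ≤ M * |s - s₀| ^ n := by
  have hc : Continuous (iteratedDeriv n γ) := hγ.continuous_iteratedDeriv n (by exact_mod_cast le_top)
  obtain ⟨M, hM⟩ := (isCompact_Icc (a := a) (b := b)).exists_bound_of_continuousOn hc.continuousOn
  refine ⟨max M 1, by positivity, fun s₀ hs₀ => ?_⟩
  obtain ⟨e, he, h⟩ := exists_normal hn (fun j => iteratedDeriv (j + 1) γ s₀)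
  refine ⟨e, he, ?_⟩
  have hit : ∀ j s, iteratedDeriv (j + 1) (fun s => ⟪e, γ s - γ s₀⟫) s = ⟪e, iteratedDeriv (j + 1) γ s⟫ := by
    intro j
    induction j with
    | zero => 
      intro s
      have h1 : HasDerivAt γ (deriv γ s) s := (hγ.differentiable (by simp) s).hasDerivAt
      have := ((innerSL ℝ e).hasFDerivAt.comp_hasDerivAt s (h1.sub_const (γ s₀))).deriv
      simpa [iteratedDeriv_one, Function.comp_def] using this
    | succ j ih =>
      intro s
      rw [iteratedDeriv_succ, funext ih, iteratedDeriv_succ (n := j + 1)]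
      have h1 : HasDerivAt (iteratedDeriv (j+1) γ) (deriv (iteratedDeriv (j+1) γ) s) s :=
        (hγ.differentiable_iteratedDeriv (j+1) (by exact_mod_cast ENat.natCast_lt_top (j + 1)) s).hasDerivAt
      exact ((innerSL ℝ e).hasFDerivAt.comp_hasDerivAt s h1).deriv
  apply taylor_bd a b _ s₀ hs₀ n
  · exact contDiff_const.inner ℝ (hγ.sub contDiff_const)
  · intro j hj
    cases j with
    | zero => simp
    | succ j => rw [hit, real_inner_comm]; exact h j (by omega)
  · intro s hs
    obtain ⟨m, rfl⟩ : ∃ m, n = m + 1 := ⟨n - 1, by omega⟩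
    rw [hit]
    refine (abs_real_inner_le_norm _ _).trans ?_
    rw [he, one_mul]
    exact (hM s hs).trans (le_max_left _ _)

/-- Choice of signs. -/
lemma exists_signs {E : Type*} [NormedAddCommGroup E] [InnerProductSpace ℂ E] (v : ℕ → E) (N : ℕ) :
    ∃ ε : ℕ → ℂ, (∀ k, ‖ε k‖ = 1) ∧
      ∑ k ∈ Finset.range N, ‖v k‖ ^ 2 ≤ ‖∑ k ∈ Finset.range N, ε k • v k‖ ^ 2 := by
  induction N with
  | zero => exact ⟨fun _ => 1, by simp, by simp⟩
  | succ N ih =>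
    obtain ⟨ε, h1, h2⟩ := ih
    have key : ∃ δ : ℂ, ‖δ‖ = 1 ∧ ‖∑ k ∈ Finset.range N, ε k • v k‖ ^ 2 + ‖v N‖ ^ 2 ≤
        ‖∑ k ∈ Finset.range N, ε k • v k + δ • v N‖ ^ 2 := by
      have := parallelogram_law_with_norm ℂ (∑ k ∈ Finset.range N, ε k • v k) (v N)
      by_contra! hcon
      have a1 := hcon 1 (by simp)
      have a2 := hcon (-1) (by simp)
      simp only [one_smul, neg_smul, ← sub_eq_add_neg] at a1 a2
      nlinarith
    obtain ⟨δ, h3, h4⟩ := key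
    refine ⟨fun k => if k = N then δ else ε k, ?_, ?_⟩
    · intro k; dsimp only; split_ifs <;> simp [*]
    · rw [Finset.sum_range_succ, Finset.sum_range_succ]
      have : ∑ k ∈ Finset.range N, (if k = N then δ else ε k) • v k = ∑ k ∈ Finset.range N, ε k • v k := by
        apply Finset.sum_congr rfl
        intro k hk
        rw [if_neg (by simp at hk; omega)]
      simp only [this, if_true]
      linarith

lemma phi_decay {n : ℕ} (S : 𝓢(Euc n, ℂ)) (φ : Euc n → ℝ) (hφ : ∀ x, S x = (φ x : ℂ)) (h0 : ∀ x, 0 ≤ φ x) :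
    ∃ C > 0, ∀ y, φ y ≤ C * ((1 + ‖y‖) ^ 3)⁻¹ := by
  have h := fun y => SchwartzMap.one_add_le_sup_seminorm_apply (𝕜 := ℝ) (m := (3, 0)) (k := 3) (n := 0) le_rfl le_rfl S y
  set C := (2 ^ (3, 0).1 * ((Finset.Iic ((3, 0) : ℕ × ℕ)).sup fun m => SchwartzMap.seminorm ℝ m.1 m.2) S : ℝ) with hC
  refine ⟨max C 1, by positivity, fun y => ?_⟩
  have h1 := h y
  rw [norm_iteratedFDeriv_zero, hφ, Complex.norm_real, Real.norm_of_nonneg (h0 y)] at h1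
  rw [← div_eq_mul_inv, le_div_iff₀ (by positivity), mul_comm]
  exact h1.trans (le_max_left _ _)

lemma w_integrable : Integrable (fun t : ℝ => ((1 + |t|) ^ 2)⁻¹) := by
  refine integrable_inv_one_add_sq.mono' ?_ ?_
  · exact Continuous.aestronglyMeasurable (by
      apply Continuous.inv₀ (by fun_prop)
      intro t; positivity)
  · filter_upwards with t
    rw [Real.norm_of_nonneg (by positivity)]
    apply inv_anti₀ (by positivity)
    have := abs_nonneg t
    have := sq_abs t
    nlinarith

lemma w_integral (ρ : ℝ) (hρ : 0 < ρ) (s₁ : ℝ) :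
    Integrable (fun s : ℝ => ((1 + ρ * |s - s₁|) ^ 2)⁻¹) ∧
    ∫ s : ℝ, ((1 + ρ * |s - s₁|) ^ 2)⁻¹ = ρ⁻¹ * ∫ t : ℝ, ((1 + |t|) ^ 2)⁻¹ := by
  have e : ∀ s : ℝ, ((1 + ρ * |s - s₁|) ^ 2)⁻¹ = (fun u : ℝ => ((1 + |ρ * u|) ^ 2)⁻¹) (s - s₁) := by
    intro s; simp only [abs_mul, abs_of_pos hρ]
  simp_rw [e]
  constructor
  · exact (w_integrable.comp_mul_left' hρ.ne').comp_sub_right s₁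
  · rw [integral_sub_right_eq_self (fun u : ℝ => ((1 + |ρ * u|) ^ 2)⁻¹) s₁]
    rw [Measure.integral_comp_mul_left (fun u : ℝ => ((1 + |u|) ^ 2)⁻¹) ρ]
    simp [abs_of_pos hρ]

lemma one_sub_cos_le (D τ θ : ℝ) (n : ℕ) (hn : 2 ≤ n) (hD : 1 ≤ D) (hτ : 0 ≤ τ) (hθ : |θ| ≤ D * τ ^ n) :
    1 - Real.cos θ ≤ 2 * D * τ := by
  by_cases h : 1 ≤ τ
  · have := Real.neg_one_le_cos θ
    nlinarith
  · push Not at h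
    have h1 : τ ^ n ≤ τ := pow_le_of_le_one hτ h.le (by omega)
    have h2 : |θ| ≤ D * τ := hθ.trans (by gcongr)
    by_cases h3 : |θ| ≤ 1
    · have := Real.one_sub_sq_div_two_le_cos (x := θ)
      have := sq_abs θ
      have := abs_nonneg θ
      nlinarith
    · have := Real.neg_one_le_cos θ
      nlinarith

set_option maxHeartbeats 1000000 in
lemma avg_lower {n : ℕ} (hn : 2 ≤ n) (a b : ℝ) (γ : ℝ → Euc n) (hγ : Continuous γ)
    (χ : ℝ → ℝ) (hχ : Continuous χ) (hχc : HasCompactSupport χ)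
    (hχs : tsupport χ ⊆ Set.Ioo a b) (hχpos : ∀ s, 0 ≤ χ s)
    (s₀ η m₀ : ℝ) (hη : 0 < η) (hm₀ : 0 < m₀) (hm : ∀ s ∈ Icc s₀ (s₀ + 2 * η), m₀ ≤ χ s)
    (c₁ : ℝ) (hc₁ : 0 < c₁) (hlo : ∀ s ∈ Icc a b, ∀ t ∈ Icc a b, c₁ * |s - t| ≤ ‖γ s - γ t‖)
    (C₂ : ℝ) (hC₂ : 0 < C₂) (hup : ∀ s ∈ Icc a b, ∀ t ∈ Icc a b, ‖γ s - γ t‖ ≤ C₂ * |s - t|)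
    (M : ℝ) (hM : 0 < M)
    (φ : Euc n → ℝ) (hφc : Continuous φ) (hφ0 : ∀ x, 0 ≤ φ x) (hφ1 : 0 < φ 0)
    (C₀ : ℝ) (hC₀ : 0 < C₀) (hφd : ∀ y, φ y ≤ C₀ * ((1 + ‖y‖) ^ 3)⁻¹) :
    ∃ c > 0, ∃ r > 0, ∃ R ≥ 1, ∀ L ≥ 1, ∀ s₁ ∈ Icc s₀ (s₀ + η), ∀ e : Euc n,
      (∀ s ∈ Icc a b, |⟪e, γ s - γ s₁⟫| ≤ M * |s - s₁| ^ n) →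
      ∀ f : Euc n → ℂ, (∀ x, f x = Complex.exp (((2 * Real.pi * ⟪L ^ n • e, x + γ s₁⟫ : ℝ) : ℂ) * Complex.I) *
        (φ ((R * L) • (x + γ s₁)) : ℂ)) →
      ∀ x, ‖x‖ ≤ r / (R * L) → c / (R * L) ≤ ‖avgOp γ χ f x‖ := by
  have hsup : ∀ s, s ∉ Icc a b → χ s = 0 := by
    intro s hs
    apply image_eq_zero_of_notMem_tsupport
    exact fun h => hs (Ioo_subset_Icc_self (hχs h))
  have hJ : ∀ s ∈ Icc s₀ (s₀ + 2 * η), s ∈ Icc a b := by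
    intro s hs
    by_contra h
    have := hm s hs
    rw [hsup s h] at this
    linarith
  obtain ⟨X, hX⟩ := hχc.exists_bound_of_continuous hχ
  have hX0 : 0 ≤ X := (norm_nonneg _).trans (hX 0)
  -- positivity near zero
  obtain ⟨δ, hδ, hκ⟩ : ∃ δ > 0, ∀ y : Euc n, ‖y‖ < δ → φ 0 / 2 < φ y := by
    have := (hφc.tendsto 0).eventually_const_lt (half_lt_self hφ1)
    rw [Metric.eventually_nhds_iff] at this
    obtain ⟨δ, hδ, h⟩ := this
    exact ⟨δ, hδ, fun y hy => h (by simpa using hy)⟩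
  set κ := φ 0 / 2 with hκd
  have hκ0 : 0 < κ := half_pos hφ1
  obtain ⟨r, hr0, hr1, hr2, hr3⟩ : ∃ r > 0, r ≤ 1 ∧ 2 * r < δ ∧ r ≤ C₂ * η := by
    refine ⟨min 1 (min (δ / 3) (C₂ * η)), by positivity, min_le_left _ _, ?_, ?_⟩
    · have : min 1 (min (δ / 3) (C₂ * η)) ≤ δ / 3 := (min_le_right _ _).trans (min_le_left _ _)
      linarith
    · exact (min_le_right _ _).trans (min_le_right _ _)
  set W := ∫ t : ℝ, ((1 + |t|) ^ 2)⁻¹ with hW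
  have hW0 : 0 ≤ W := integral_nonneg (fun t => by positivity)
  set D := max 1 (2 * Real.pi * M) with hD
  have hD1 : 1 ≤ D := le_max_left _ _
  set c₁' := min 1 c₁ with hc1'
  have hc₁'0 : 0 < c₁' := lt_min one_pos hc₁
  set C₃ := C₀ * (2 / c₁') ^ 3 with hC3
  have hC₃ : 0 < C₃ := by positivity
  set E := 2 * D * C₃ * X * W with hE
  have hE0 : 0 ≤ E := by positivity
  set c := κ * m₀ * r / (2 * C₂) with hc
  have hc0 : 0 < c := by positivity
  refine ⟨c, hc0, r, hr0, max 1 (E / c), le_max_left _ _, ?_⟩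
  set R := max 1 (E / c) with hR
  have hR1 : 1 ≤ R := le_max_left _ _
  have hR2 : E / R ≤ c := by
    rw [div_le_iff₀ (by positivity), mul_comm, ← div_le_iff₀ hc0]
    exact le_max_right _ _
  intro L hL s₁ hs₁ e he f hf x hx
  set ρ := R * L with hρ
  have hρ1 : 1 ≤ ρ := by nlinarith
  have hρ0 : 0 < ρ := by linarith
  have hs₁' : s₁ ∈ Icc a b := hJ s₁ ⟨hs₁.1, by linarith [hs₁.2]⟩
  set u : ℝ → ℝ := fun s => φ (ρ • (x - (γ s - γ s₁))) with hu
  set θ : ℝ → ℝ := fun s => 2 * Real.pi * ⟪L ^ n • e, γ s - γ s₁⟫ with hθ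
  have huc : Continuous u := by
    apply hφc.comp
    fun_prop
  have hθc : Continuous θ := by
    rw [hθ]
    exact continuous_const.mul (continuous_const.inner (hγ.sub continuous_const))
  have hu0 : ∀ s, 0 ≤ u s := fun s => hφ0 _
  have hphase : ∀ s ∈ Icc a b, 1 - Real.cos (θ s) ≤ 2 * D * (L * |s - s₁|) := by
    intro s hs
    apply one_sub_cos_le D _ _ n hn hD1 (by positivity)
    rw [hθ]
    simp only [inner_smul_left, abs_mul, mul_pow]
    have := he s hs
    have h2 : |(2:ℝ)| * |Real.pi| = 2 * Real.pi := by rw [abs_of_pos two_pos, abs_of_pos Real.pi_pos]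
    have h3 : |(starRingEnd ℝ) (L ^ n)| = L ^ n := by
      simp [abs_of_pos (show (0:ℝ) < L by linarith)]
    rw [h2, h3]
    calc 2 * Real.pi * (L ^ n * |⟪e, γ s - γ s₁⟫|) ≤ 2 * Real.pi * (L ^ n * (M * |s - s₁| ^ n)) := by gcongr
      _ = (2 * Real.pi * M) * (L ^ n * |s - s₁| ^ n) := by ring
      _ ≤ D * (L ^ n * |s - s₁| ^ n) := by
        gcongr
        exact le_max_right _ _
  have hud : ∀ s ∈ Icc a b, u s ≤ C₃ * ((1 + ρ * |s - s₁|) ^ 3)⁻¹ := by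
    intro s hs
    refine (hφd _).trans ?_
    rw [hC3, mul_assoc]
    refine mul_le_mul_of_nonneg_left ?_ hC₀.le
    set y := ρ • (x - (γ s - γ s₁)) with hy
    have h1 : ‖y‖ = ρ * ‖x - (γ s - γ s₁)‖ := by rw [hy, norm_smul, Real.norm_of_nonneg hρ0.le]
    have h2 : ‖γ s - γ s₁‖ - ‖x‖ ≤ ‖x - (γ s - γ s₁)‖ := by
      rw [norm_sub_rev x]; exact norm_sub_norm_le _ _
    have h3 := hlo s hs s₁ hs₁'
    have h4 : ρ * ‖x‖ ≤ 1 := by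
      rw [le_div_iff₀ hρ0] at hx
      linarith
    have h5 : ρ * (c₁ * |s - s₁|) - 1 ≤ ‖y‖ := by
      rw [h1]; nlinarith
    have h6 : c₁' * (1 + ρ * |s - s₁|) ≤ 2 * (1 + ‖y‖) := by
      have a1 : c₁' ≤ 1 := min_le_left _ _
      have a2 : c₁' * (ρ * |s - s₁|) ≤ c₁ * (ρ * |s - s₁|) := by
        gcongr
        exact min_le_right _ _
      have := norm_nonneg y
      nlinarith
    rw [← inv_pow, ← inv_pow, ← mul_pow]
    gcongr
    rw [inv_eq_one_div, ← div_eq_mul_inv, div_div, div_le_div_iff₀ (by positivity) (by positivity)]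
    linarith
  -- the real part
  have hInteg : ∀ g : ℝ → ℝ, Continuous g → Integrable (fun s => g s * χ s) := by
    intro g hg
    exact (hg.mul hχ).integrable_of_hasCompactSupport hχc.mul_left
  have hre : ∫ s, Real.cos (θ s) * u s * χ s ≤ ‖avgOp γ χ f x‖ := by
    have h1 : avgOp γ χ f x = Complex.exp (((2 * Real.pi * ⟪L ^ n • e, x⟫ : ℝ) : ℂ) * Complex.I) *
        ∫ s, Complex.exp (((-θ s : ℝ) : ℂ) * Complex.I) * ((u s * χ s : ℝ) : ℂ) := by
      rw [avgOp, ← integral_const_mul]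
      congr 1
      ext s
      rw [hf, show x - γ s + γ s₁ = x - (γ s - γ s₁) by abel, ← mul_assoc, ← Complex.exp_add, 
        ← add_mul, ← Complex.ofReal_add, Complex.ofReal_mul (u s), ← mul_assoc]
      congr 5
      rw [hθ, inner_sub_right]
      ring
    rw [h1, norm_mul, Complex.norm_exp_ofReal_mul_I, one_mul]
    refine le_trans (le_of_eq ?_) (Complex.re_le_norm _)
    have hcint : Integrable (fun s => Complex.exp (((-θ s : ℝ) : ℂ) * Complex.I) * ((u s * χ s : ℝ) : ℂ)) := by
      apply Continuous.integrable_of_hasCompactSupport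
      · fun_prop
      · apply HasCompactSupport.mul_left
        exact (hχc.mul_left (f := u)).comp_left (g := fun r : ℝ => (r : ℂ)) (by simp)
    have := (Complex.reCLM.integral_comp_comm hcint).symm
    simp only [Complex.reCLM_apply] at this
    rw [this]
    congr 1
    ext s
    rw [Complex.re_mul_ofReal, Complex.exp_ofReal_mul_I_re, Real.cos_neg]
    ring
  refine le_trans ?_ hre
  have hsplit : ∫ s, Real.cos (θ s) * u s * χ s = (∫ s, u s * χ s) - ∫ s, (1 - Real.cos (θ s)) * u s * χ s := by
    rw [← integral_sub (hInteg u huc) (hInteg (fun s => (1 - Real.cos (θ s)) * u s) (by fun_prop))]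
    congr 1; ext s; ring
  rw [hsplit]
  have herr : ∫ s, (1 - Real.cos (θ s)) * u s * χ s ≤ E / R / ρ := by
    obtain ⟨w1, w2⟩ := w_integral ρ hρ0 s₁
    have : E / R / ρ = ∫ s, (2 * D * C₃ * X / R) * ((1 + ρ * |s - s₁|) ^ 2)⁻¹ := by
      rw [integral_const_mul, w2, ← hW, hE]
      field_simp
    rw [this]
    refine integral_mono (hInteg (fun s => (1 - Real.cos (θ s)) * u s) (by fun_prop)) (w1.const_mul _) ?_
    intro s
    dsimp only
    by_cases hs : s ∈ Icc a b
    · have h1 := hphase s hs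
      have h2 := hud s hs
      have h3 : χ s ≤ X := (le_abs_self _).trans (hX s)
      have h4 : 0 ≤ 1 - Real.cos (θ s) := by linarith [Real.cos_le_one (θ s)]
      calc (1 - Real.cos (θ s)) * u s * χ s
          ≤ (2 * D * (L * |s - s₁|)) * (C₃ * ((1 + ρ * |s - s₁|) ^ 3)⁻¹) * X := by
            have := hu0 s
            have := hχpos s
            gcongr
        _ = (2 * D * C₃ * X / R) * ((ρ * |s - s₁|) * ((1 + ρ * |s - s₁|) ^ 3)⁻¹) := by
            rw [hρ]; field_simp
        _ ≤ (2 * D * C₃ * X / R) * ((1 + ρ * |s - s₁|) ^ 2)⁻¹ := by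
            gcongr
            rw [← div_eq_mul_inv, inv_eq_one_div, div_le_div_iff₀ (by positivity) (by positivity)]
            have : 0 ≤ ρ * |s - s₁| := by positivity
            nlinarith [sq_nonneg (1 + ρ * |s - s₁|)]
    · rw [hsup s hs, mul_zero]; positivity
  have hmain : 2 * c / ρ ≤ ∫ s, u s * χ s := by
    set ℓ := r / (C₂ * ρ) with hℓ
    have hℓ0 : 0 < ℓ := by positivity
    have hℓη : ℓ ≤ η := by
      rw [hℓ, div_le_iff₀ (by positivity)]
      nlinarith [mul_pos hC₂ hη]
    have h1 : ∫ s in Icc s₁ (s₁ + ℓ), u s * χ s ≤ ∫ s, u s * χ s :=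
      setIntegral_le_integral (hInteg u huc) (Filter.Eventually.of_forall fun s => mul_nonneg (hu0 s) (hχpos s))
    refine le_trans ?_ h1
    have h2 : ∫ s in Icc s₁ (s₁ + ℓ), κ * m₀ = 2 * c / ρ := by
      rw [setIntegral_const, Measure.real, Real.volume_Icc, ENNReal.toReal_ofReal (by linarith), smul_eq_mul, hc, hℓ]
      field_simp
      ring
    rw [← h2]
    refine setIntegral_mono_on continuous_const.integrableOn_Icc (hInteg u huc).integrableOn measurableSet_Icc ?_
    intro s hs
    have hs2 : s ∈ Icc s₀ (s₀ + 2 * η) := ⟨by linarith [hs.1, hs₁.1], by linarith [hs.2, hs₁.2]⟩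
    refine mul_le_mul ?_ (hm s hs2) hm₀.le (hu0 s)
    apply (hκ _ _).le
    rw [norm_smul, Real.norm_of_nonneg hρ0.le]
    have h3 := hup s (hJ s hs2) s₁ hs₁'
    have h4 : |s - s₁| ≤ ℓ := by rw [abs_of_nonneg (by linarith [hs.1])]; linarith [hs.2]
    have h5 : ‖γ s - γ s₁‖ ≤ r / ρ := by
      refine h3.trans ?_
      calc C₂ * |s - s₁| ≤ C₂ * ℓ := by gcongr
        _ = r / ρ := by rw [hℓ]; field_simp
    have h6 := norm_sub_le x (γ s - γ s₁)
    calc ρ * ‖x - (γ s - γ s₁)‖ ≤ ρ * (r / ρ + r / ρ) := by gcongr; linarith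
      _ = 2 * r := by field_simp; ring
      _ < δ := hr2
  have : E / R / ρ ≤ c / ρ := by gcongr
  have : 2 * c / ρ = c / ρ + c / ρ := by ring
  linarith



lemma sum_sup {n : ℕ} (φ : Euc n → ℝ) (hφ0 : ∀ x, 0 ≤ φ x)
    (C₀ : ℝ) (hC₀ : 0 < C₀) (hφd : ∀ y, φ y ≤ C₀ * ((1 + ‖y‖) ^ 3)⁻¹) (d : ℝ) (hd : 0 < d) :
    ∃ C ≥ 1, ∀ (ρ : ℝ) (_ : 0 < ρ) (N : ℕ) (v : ℕ → Euc n),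
      (∀ k < N, ∀ l < N, d * |(k : ℝ) - l| ≤ ρ * ‖v k - v l‖) →
      ∀ x, ∑ k ∈ Finset.range N, φ (ρ • (x + v k)) ≤ C := by
  let G : ℤ → ℝ := fun j => C₀ * ((1 + d / 2 * |(j : ℝ)|) ^ 2)⁻¹
  have hG0 : ∀ j, 0 ≤ G j := fun j => by positivity
  have hGs : Summable G := by
    apply Summable.mul_left
    have h1 : Summable (fun j : ℤ => (d / 2) ^ (-2 : ℤ) * (1 / (j : ℝ) ^ 2)) :=
      (Real.summable_one_div_int_pow.mpr (by norm_num)).mul_left _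
    refine Summable.of_norm_bounded_eventually h1 ?_
    rw [Filter.eventually_cofinite]
    refine (Set.finite_singleton (0 : ℤ)).subset ?_
    intro j hj
    by_contra hj0
    apply hj
    have hj1 : (0 : ℝ) < |(j : ℝ)| := by
      rw [abs_pos]; exact_mod_cast hj0
    rw [Real.norm_of_nonneg (by positivity), zpow_neg, one_div, ← mul_inv]
    apply inv_anti₀
    · have := sq_abs (j : ℝ)
      rw [← this]; positivity
    · rw [← sq_abs (j : ℝ)]
      rw [show (d / 2) ^ (2 : ℤ) = (d / 2) ^ 2 from zpow_ofNat _ 2, ← mul_pow]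
      gcongr
      linarith
  refine ⟨max 1 (∑' j, G j), le_max_left _ _, ?_⟩
  intro ρ hρ N v hv x
  rcases Nat.eq_zero_or_pos N with rfl | hN
  · simp
  obtain ⟨l, hl, hmin⟩ := Finset.exists_min_image (Finset.range N) (fun k => ‖x + v k‖) ⟨0, by simpa using hN⟩
  refine le_trans ?_ (le_max_right _ _)
  have h1 : ∑ k ∈ Finset.range N, φ (ρ • (x + v k)) ≤ ∑ k ∈ Finset.range N, G ((k : ℤ) - l) := by
    apply Finset.sum_le_sum
    intro k hk
    refine (hφd _).trans ?_
    have a1 := hv k (by simpa using hk) l (by simpa using hl)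
    have a2 := hmin k hk
    have a3 : ‖v k - v l‖ ≤ ‖x + v k‖ + ‖x + v l‖ := by
      rw [show v k - v l = (x + v k) - (x + v l) by abel]; exact norm_sub_le _ _
    have a4 : d / 2 * |(k : ℝ) - l| ≤ ‖ρ • (x + v k)‖ := by
      rw [norm_smul, Real.norm_of_nonneg hρ.le]
      have : ρ * ‖v k - v l‖ ≤ ρ * (2 * ‖x + v k‖) := by gcongr; linarith
      linarith
    simp only [G]
    push_cast
    gcongr
    calc (1 + d / 2 * |(k : ℝ) - l|) ^ 2 ≤ (1 + ‖ρ • (x + v k)‖) ^ 2 := by gcongr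
      _ ≤ (1 + ‖ρ • (x + v k)‖) ^ 3 := by
        apply pow_le_pow_right₀ _ (by norm_num)
        linarith [norm_nonneg (ρ • (x + v k))]
  refine h1.trans ?_
  have h2 : ∑ k ∈ Finset.range N, G ((k : ℤ) - l) = ∑ j ∈ (Finset.range N).image (fun k : ℕ => (k : ℤ) - l), G j := by
    rw [Finset.sum_image]
    intro x _ y _ h
    simpa using h
  rw [h2]
  exact hGs.sum_le_tsum _ (fun j _ => hG0 j)

lemma norm_upper {n : ℕ} (p : ℝ≥0∞) (hp : 2 ≤ p) (f : Euc n → ℂ) (C T : ℝ) (hC : 1 ≤ C) (hT : 0 ≤ T)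
    (h1 : ∀ x, ‖f x‖ ≤ C) (h2 : ∫⁻ x, ‖f x‖ₑ ≤ ENNReal.ofReal T) :
    eLpNorm f p volume ≤ ENNReal.ofReal (C * T ^ (1 / p).toReal) := by
  rcases eq_or_ne p ⊤ with rfl | hp'
  · simp only [one_div, ENNReal.inv_top, ENNReal.toReal_zero, Real.rpow_zero, mul_one]
    rw [eLpNorm_exponent_top]
    refine eLpNormEssSup_le_of_ae_bound (Filter.Eventually.of_forall h1)
  · have hp0 : p ≠ 0 := by rintro rfl; simp at hp
    have hq : 2 ≤ p.toReal := by
      have := ENNReal.toReal_mono hp' hp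
      simpa using this
    have hq0 : 0 < p.toReal := by linarith
    rw [eLpNorm_eq_lintegral_rpow_enorm_toReal hp0 hp']
    have h3 : ∫⁻ x, ‖f x‖ₑ ^ p.toReal ≤ ENNReal.ofReal C ^ p.toReal * ENNReal.ofReal T := by
      calc ∫⁻ x, ‖f x‖ₑ ^ p.toReal ≤ ∫⁻ x, ENNReal.ofReal C ^ p.toReal * ‖f x‖ₑ := by
            apply lintegral_mono
            intro x
            have e1 : ‖f x‖ₑ ≤ ENNReal.ofReal C := by
              rw [← ofReal_norm]; exact ENNReal.ofReal_le_ofReal (h1 x)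
            calc ‖f x‖ₑ ^ p.toReal = ‖f x‖ₑ ^ ((p.toReal - 1) + 1) := by ring_nf
              _ = ‖f x‖ₑ ^ (p.toReal - 1) * ‖f x‖ₑ := by
                rw [ENNReal.rpow_add_of_nonneg _ _ (by linarith) zero_le_one, ENNReal.rpow_one]
              _ ≤ ENNReal.ofReal C ^ (p.toReal - 1) * ‖f x‖ₑ := by
                gcongr
                linarith
              _ ≤ ENNReal.ofReal C ^ p.toReal * ‖f x‖ₑ := by
                gcongr
                · rw [ENNReal.one_le_ofReal]; exact hC
                · linarith
        _ = ENNReal.ofReal C ^ p.toReal * ∫⁻ x, ‖f x‖ₑ := by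
            rw [lintegral_const_mul' _ _ (by simp [ENNReal.rpow_eq_top_iff, hq0.le])]
        _ ≤ _ := by gcongr
    calc (∫⁻ x, ‖f x‖ₑ ^ p.toReal) ^ (1 / p.toReal)
        ≤ (ENNReal.ofReal C ^ p.toReal * ENNReal.ofReal T) ^ (1 / p.toReal) := by gcongr
      _ = ENNReal.ofReal C * ENNReal.ofReal T ^ (1 / p.toReal) := by
        rw [ENNReal.mul_rpow_of_nonneg _ _ (by positivity), ← ENNReal.rpow_mul, mul_one_div_cancel hq0.ne',
          ENNReal.rpow_one]
      _ = ENNReal.ofReal (C * T ^ (1 / p).toReal) := by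
        rw [ENNReal.ofReal_mul (by linarith), ENNReal.ofReal_rpow_of_nonneg hT (by positivity)]
        simp

lemma avg_continuous {n : ℕ} (γ : ℝ → Euc n) (hγ : Continuous γ)
    (χ : ℝ → ℝ) (hχ : Continuous χ) (hχc : HasCompactSupport χ) (f : Euc n → ℂ) (hf : Continuous f)
    (C : ℝ) (hC : ∀ x, ‖f x‖ ≤ C) :
    Continuous (avgOp γ χ f) ∧ ∃ C', ∀ x, ‖avgOp γ χ f x‖ ≤ C' := by
  have hi : Integrable (fun s => C * ‖χ s‖) :=
    ((hχ.integrable_of_hasCompactSupport hχc).norm).const_mul C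
  have hb : ∀ x s, ‖f (x - γ s) * (χ s : ℂ)‖ ≤ C * ‖χ s‖ := by
    intro x s
    rw [norm_mul, Complex.norm_real]
    gcongr
    exact hC _
  constructor
  · refine continuous_of_dominated (bound := fun s => C * ‖χ s‖) ?_ ?_ hi ?_
    · intro x
      exact Continuous.aestronglyMeasurable (by fun_prop)
    · intro x
      exact Filter.Eventually.of_forall (hb x)
    · exact Filter.Eventually.of_forall (fun s => by fun_prop)
  · exact ⟨_, fun x => norm_integral_le_of_norm_le hi (Filter.Eventually.of_forall (hb x))⟩

lemma norm_lower {n : ℕ} (p : ℝ≥0∞) (hp : 2 ≤ p) (N : ℕ) (h : ℕ → Euc n → ℂ)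
    (hc : ∀ k, Continuous (h k)) (C : ℕ → ℝ) (hC : ∀ k x, ‖h k x‖ ≤ C k) (r : ℝ) (hr : 0 < r) (A : ℝ) (hA : 0 ≤ A)
    (hlow : ∀ k < N, ∀ x, ‖x‖ ≤ r → A ≤ ‖h k x‖) :
    ∃ ε : ℕ → ℂ, (∀ k, ‖ε k‖ = 1) ∧
      ENNReal.ofReal (A * (N : ℝ) ^ (1 / 2 : ℝ) * (volume (Metric.closedBall (0 : Euc n) r)).toReal ^ (1 / p).toReal) ≤
        eLpNorm (fun x => ∑ k ∈ Finset.range N, ε k * h k x) p volume := by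
  set B := Metric.closedBall (0 : Euc n) r with hB
  set μ := volume.restrict B with hμ
  have hBfin : volume B ≠ ⊤ := measure_closedBall_lt_top.ne
  have hBpos : 0 < volume B := Metric.measure_closedBall_pos _ _ hr
  have : IsFiniteMeasure μ := ⟨by rw [hμ, Measure.restrict_apply_univ]; exact hBfin.lt_top⟩
  set V := (volume B).toReal with hV
  have hV0 : 0 < V := ENNReal.toReal_pos hBpos.ne' hBfin
  have hVo : ENNReal.ofReal V = volume B := ENNReal.ofReal_toReal hBfin
  have hmem : ∀ k, MemLp (h k) 2 μ := fun k =>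
    MemLp.of_bound (hc k).aestronglyMeasurable (C k) (Filter.Eventually.of_forall (hC k))
  have hlowk : ∀ k < N, ENNReal.ofReal (A * V ^ (1 / 2 : ℝ)) ≤ eLpNorm (h k) 2 μ := by
    intro k hk
    have h1 : eLpNorm (fun _ : Euc n => (A : ℂ)) 2 μ ≤ eLpNorm (h k) 2 μ := by
      apply eLpNorm_mono_ae
      rw [hμ, ae_restrict_iff' Metric.isClosed_closedBall.measurableSet]
      filter_upwards with x hx
      rw [Complex.norm_real, Real.norm_of_nonneg hA]
      exact hlow k hk x (by simpa [hB] using hx)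
    refine le_trans (le_of_eq ?_) h1
    rw [eLpNorm_const' _ (by norm_num) (by norm_num), hμ, Measure.restrict_apply_univ, ← hVo,
      ENNReal.ofReal_mul hA, ENNReal.ofReal_rpow_of_pos hV0]
    congr 1
    rw [← ofReal_norm, Complex.norm_real, Real.norm_of_nonneg hA]
  obtain ⟨ε, hε1, hε2⟩ := exists_signs (fun k => (hmem k).toLp (h k)) N
  refine ⟨ε, hε1, ?_⟩
  set g : Euc n → ℂ := fun x => ∑ k ∈ Finset.range N, ε k * h k x with hg
  have hgc : Continuous g := by fun_prop
  have hgm : MemLp g 2 μ := by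
    rw [hg]
    exact memLp_finsetSum _ (fun k _ => (hmem k).const_mul (ε k))
  have hgL : ∑ k ∈ Finset.range N, ε k • (hmem k).toLp (h k) = hgm.toLp g := by
    apply Lp.ext
    refine Filter.EventuallyEq.trans ?_ hgm.coeFn_toLp.symm
    have e1 : ∀ᵐ x ∂μ, ∀ k ∈ Finset.range N, (ε k • (hmem k).toLp (h k) : Lp ℂ 2 μ) x = ε k * h k x := by
      rw [Filter.eventually_all_finset]
      intro k _
      filter_upwards [Lp.coeFn_smul (ε k) ((hmem k).toLp (h k)), (hmem k).coeFn_toLp] with x hx1 hx2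
      rw [hx1, Pi.smul_apply, hx2, smul_eq_mul]
    filter_upwards [e1, Lp.coeFn_finsetSum (Finset.range N) (fun k => ε k • (hmem k).toLp (h k))] with x hx1 hx2
    rw [hx2, Finset.sum_apply, hg]
    exact Finset.sum_congr rfl hx1
  have hsq : A * (N : ℝ) ^ (1 / 2 : ℝ) * V ^ (1 / 2 : ℝ) ≤ (eLpNorm g 2 μ).toReal := by
    rw [← Lp.norm_toLp g hgm, ← hgL]
    apply le_of_sq_le_sq _ (norm_nonneg _)
    refine le_trans ?_ hε2
    have : ∀ k ∈ Finset.range N, (A * V ^ (1 / 2 : ℝ)) ^ 2 ≤ ‖(hmem k).toLp (h k)‖ ^ 2 := by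
      intro k hk
      have := hlowk k (by simpa using hk)
      rw [Lp.norm_toLp]
      gcongr
      rw [← ENNReal.ofReal_le_iff_le_toReal (hmem k).eLpNorm_ne_top]
      exact this
    refine le_trans (le_of_eq ?_) (Finset.sum_le_sum this)
    rw [Finset.sum_const, Finset.card_range, nsmul_eq_mul, mul_pow, mul_pow, mul_pow]
    rw [← Real.sqrt_eq_rpow, ← Real.sqrt_eq_rpow, Real.sq_sqrt (by positivity), Real.sq_sqrt hV0.le]
    ring
  have hsq' : ENNReal.ofReal (A * (N : ℝ) ^ (1 / 2 : ℝ) * V ^ (1 / 2 : ℝ)) ≤ eLpNorm g 2 μ := by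
    rwa [ENNReal.ofReal_le_iff_le_toReal hgm.eLpNorm_ne_top]
  have hho := eLpNorm_le_eLpNorm_mul_rpow_measure_univ (μ := μ) hp hgc.aestronglyMeasurable
  have hrest : eLpNorm g p μ ≤ eLpNorm g p volume := eLpNorm_mono_measure _ Measure.restrict_le_self
  set q := (1 / p).toReal with hq
  have hq' : 1 / p.toReal = q := by rw [hq]; simp
  rw [hq', hμ, Measure.restrict_apply_univ, ← hVo, ENNReal.ofReal_rpow_of_pos hV0] at hho
  refine le_trans ?_ hrest
  have h2 := hsq'.trans hho
  have h3 : A * (N : ℝ) ^ (1 / 2 : ℝ) * V ^ (1 / 2 : ℝ) = (A * (N : ℝ) ^ (1 / 2 : ℝ) * V ^ q) * V ^ (1 / (2 : ℝ≥0∞).toReal - q) := by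
    rw [mul_assoc _ (V ^ q), ← Real.rpow_add hV0]
    simp
  rw [h3, ENNReal.ofReal_mul' (by positivity)] at h2
  have hpos : 0 < V ^ (1 / (2 : ℝ≥0∞).toReal - q) := by positivity
  exact (ENNReal.mul_le_mul_iff_left (by simpa using hpos) ENNReal.ofReal_ne_top).mp h2

lemma char_ne (X : ℝ → ℝ) (hX : Continuous X) (χ : ℝ → ℝ) (hχ : Continuous χ) (hχc : HasCompactSupport χ)
    (hχpos : ∀ s, 0 ≤ χ s) (hχi : 0 < ∫ s, χ s) (t₁ t₂ : ℝ) (ht : t₁ < t₂) :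
    ∃ t ∈ Ioo t₁ t₂, ∫ s, Complex.exp (((t * X s : ℝ) : ℂ) * Complex.I) * (χ s : ℂ) ≠ 0 := by
  by_contra! hcon
  let d : ℝ → NNReal := fun s => (χ s).toNNReal
  have hd : Measurable d := (continuous_real_toNNReal.comp hχ).measurable
  let μ : Measure ℝ := volume.withDensity (fun s => (d s : ℝ≥0∞))
  have hInteg : ∀ g : ℝ → ℂ, ∫ s, g s ∂μ = ∫ s, g s * (χ s : ℂ) := by
    intro g
    rw [integral_withDensity_eq_integral_smul hd]
    congr 1
    ext s
    rw [NNReal.smul_def, Complex.real_smul, mul_comm, Real.coe_toNNReal _ (hχpos s)]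
  have hset : ProbabilityTheory.integrableExpSet X μ = univ := by
    ext t
    simp only [mem_univ, iff_true]
    show Integrable (fun s => Real.exp (t * X s)) μ
    rw [integrable_withDensity_iff_integrable_smul hd]
    have : Integrable (fun s => χ s * Real.exp (t * X s)) :=
      Continuous.integrable_of_hasCompactSupport (by fun_prop) hχc.mul_right
    refine this.congr (Filter.Eventually.of_forall fun s => ?_)
    simp only [NNReal.smul_def, smul_eq_mul]
    rw [Real.coe_toNNReal _ (hχpos s)]
  have han : AnalyticOnNhd ℂ (ProbabilityTheory.complexMGF X μ) univ := by
    have := ProbabilityTheory.analyticOnNhd_complexMGF (X := X) (μ := μ)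
    rw [hset] at this
    simpa using this
  let g : ℝ → ℂ := fun t => ProbabilityTheory.complexMGF X μ ((t : ℂ) * Complex.I)
  have hg : ∀ t, g t = ∫ s, Complex.exp (((t * X s : ℝ) : ℂ) * Complex.I) * (χ s : ℂ) := by
    intro t
    simp only [g]
    rw [ProbabilityTheory.complexMGF, hInteg]
    congr 1
    ext s
    congr 2
    push_cast
    ring
  have hgan : AnalyticOnNhd ℝ g univ := by
    intro t _
    have h1 : AnalyticAt ℝ (ProbabilityTheory.complexMGF X μ) ((t : ℂ) * Complex.I) :=
      (han _ (mem_univ _)).restrictScalars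
    have h2 : AnalyticAt ℝ (fun t : ℝ => (t : ℂ) * Complex.I) t :=
      (Complex.ofRealCLM.analyticAt t).mul analyticAt_const
    exact AnalyticAt.fun_comp h1 h2
  have hz : AnalyticOnNhd ℝ (fun _ : ℝ => (0 : ℂ)) univ := fun _ _ => analyticAt_const
  have heq : g = fun _ => 0 := by
    apply hgan.eq_of_eventuallyEq hz (z₀ := (t₁ + t₂) / 2)
    have : Ioo t₁ t₂ ∈ 𝓝 ((t₁ + t₂) / 2) := Ioo_mem_nhds (by linarith) (by linarith)
    filter_upwards [this] with t ht
    rw [hg]; exact hcon t ht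
  have h0 := congrFun heq 0
  rw [hg] at h0
  simp only [zero_mul, Complex.ofReal_zero, Complex.exp_zero, one_mul] at h0
  rw [integral_complex_ofReal] at h0
  exact hχi.ne' (by exact_mod_cast h0)

lemma ennreal_c (x y : ℝ≥0∞) (hx : x ≠ ⊤) (hy : y ≠ 0) : ∃ c : ℝ, 0 < c ∧ ENNReal.ofReal c * x ≤ y := by
  have h1 : min y 1 ≠ ⊤ := ne_top_of_le_ne_top ENNReal.one_ne_top (min_le_right _ _)
  have h2 : min y 1 ≠ 0 := by
    simp [hy]
  have h3 := ENNReal.toReal_pos h2 h1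
  have h4 : 0 < x.toReal + 1 := by positivity
  refine ⟨(min y 1).toReal / (x.toReal + 1), by positivity, ?_⟩
  refine le_trans ?_ (min_le_left y 1)
  rw [← ENNReal.ofReal_toReal h1, ← ENNReal.ofReal_toReal hx, ← ENNReal.ofReal_mul (by positivity)]
  apply ENNReal.ofReal_le_ofReal
  rw [ENNReal.toReal_ofReal (by positivity), ENNReal.toReal_ofReal (by positivity), div_mul_eq_mul_div,
    div_le_iff₀ h4]
  nlinarith

lemma tsupport_annulus {n : ℕ} (g : Euc n → ℂ) (lam : ℝ)
    (h : ∀ ξ, g ξ ≠ 0 → lam / 2 ≤ ‖ξ‖ ∧ ‖ξ‖ ≤ 2 * lam) :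
    tsupport g ⊆ {ξ : Euc n | lam / 2 ≤ ‖ξ‖ ∧ ‖ξ‖ ≤ 2 * lam} := by
  apply closure_minimal
  · intro ξ hξ
    exact h ξ hξ
  · exact (isClosed_le continuous_const continuous_norm).inter (isClosed_le continuous_norm continuous_const)

lemma small_one {n : ℕ} (hn : 2 ≤ n) (p : ℝ≥0∞) (hp : 2 ≤ p) (γ : ℝ → Euc n) (hγ : Continuous γ)
    (χ : ℝ → ℝ) (hχ : Continuous χ) (hχc : HasCompactSupport χ)
    (hχpos : ∀ s, 0 ≤ χ s) (hχi : 0 < ∫ s, χ s) (S : 𝓢(Euc n, ℂ)) (φ : Euc n → ℝ) (hφc : Continuous φ)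
    (hφ : ∀ x, (𝓕⁻ S) x = (φ x : ℂ)) (hS : ∀ ξ, 1 ≤ ‖ξ‖ → S ξ = 0)
    (hφ1 : 0 < φ 0) (C₀ : ℝ) (hφb : ∀ y, |φ y| ≤ C₀) (l : ℝ) (hl : 1 ≤ l) :
    ∃ c : ℝ, 0 < c ∧ ∀ lam ∈ Ioo (l * (13 / 16)) (l * (5 / 4)),
      ∃ f : SchwartzMap (Euc n) ℂ, f ≠ 0 ∧
        tsupport (𝓕 ⇑f) ⊆ {ξ : Euc n | lam / 2 ≤ ‖ξ‖ ∧ ‖ξ‖ ≤ 2 * lam} ∧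
        ENNReal.ofReal c * eLpNorm (⇑f) p volume ≤ eLpNorm (avgOp γ χ ⇑f) p volume := by
  let w0 : Euc n := EuclideanSpace.single (⟨0, by omega⟩ : Fin n) (1 : ℝ)
  have hw0 : ‖w0‖ = 1 := by simp [w0]
  obtain ⟨t, ht, hne⟩ := char_ne (fun s => 2 * Real.pi * ⟪w0, -γ s⟫) (by
    exact continuous_const.mul (continuous_const.inner hγ.neg)) χ hχ hχc hχpos hχi (l * (3 / 4)) (l * (3 / 2)) (by linarith)
  let H : ℝ → ℂ := fun ε => ∫ s, Complex.exp (((t * (2 * Real.pi * ⟪w0, -γ s⟫) : ℝ) : ℂ) * Complex.I) *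
    (φ (ε • (-γ s)) : ℂ) * (χ s : ℂ)
  have hHc : Continuous H := by
    have hi : Integrable (fun s => C₀ * ‖χ s‖) :=
      ((hχ.integrable_of_hasCompactSupport hχc).norm).const_mul C₀
    refine continuous_of_dominated (bound := fun s => C₀ * ‖χ s‖) ?_ ?_ hi ?_
    · intro x
      exact Continuous.aestronglyMeasurable (by fun_prop)
    · intro x
      refine Filter.Eventually.of_forall (fun s => ?_)
      rw [norm_mul, norm_mul, Complex.norm_exp_ofReal_mul_I, one_mul, Complex.norm_real, Complex.norm_real]
      gcongr
      exact hφb _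
    · exact Filter.Eventually.of_forall (fun s => by fun_prop)
  have hH0 : H 0 ≠ 0 := by
    have : H 0 = (φ 0 : ℂ) * ∫ s, Complex.exp (((t * (2 * Real.pi * ⟪w0, -γ s⟫) : ℝ) : ℂ) * Complex.I) * (χ s : ℂ) := by
      simp only [H]
      rw [← integral_const_mul]
      congr 1
      ext s
      rw [zero_smul]; ring
    rw [this]
    exact mul_ne_zero (by exact_mod_cast hφ1.ne') hne
  obtain ⟨δ, hδ, hHδ⟩ : ∃ δ > 0, ∀ ε : ℝ, |ε| < δ → H ε ≠ 0 := by
    have := hHc.continuousAt.eventually_ne hH0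
    rw [Metric.eventually_nhds_iff] at this
    obtain ⟨δ, hδ, h⟩ := this
    exact ⟨δ, hδ, fun y hy => h (by simpa using hy)⟩
  let ε := min (δ / 2) (l / 8)
  have hε0 : 0 < ε := by positivity
  have hεl : ε ≤ l / 8 := min_le_right _ _
  have hεδ : |ε| < δ := by
    rw [abs_of_pos hε0]
    have : ε ≤ δ / 2 := min_le_left _ _
    linarith
  obtain ⟨f, hf, hff⟩ := exists_mod S φ hφ hS ε hε0 (t • w0) 0
  have hA0 : avgOp γ χ f 0 = H ε := by
    rw [avgOp]
    congr 1
    ext s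
    rw [hf]
    simp only [inner_smul_left, zero_sub, add_zero]
    congr 4
    simp; ring
  have hA1 : avgOp γ χ f 0 ≠ 0 := by rw [hA0]; exact hHδ ε hεδ
  have hfb : ∀ x, ‖f x‖ ≤ C₀ := by
    intro x
    rw [hf, norm_mul, Complex.norm_exp_ofReal_mul_I, one_mul, Complex.norm_real]
    exact hφb _
  have hAc := (avg_continuous γ hγ χ hχ hχc f f.continuous C₀ hfb).1
  have hAn : eLpNorm (avgOp γ χ f) p volume ≠ 0 := by
    intro h
    rw [eLpNorm_eq_zero_iff hAc.aestronglyMeasurable (by rintro rfl; simp at hp)] at h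
    have := (hAc.ae_eq_iff_eq volume continuous_const).mp h
    exact hA1 (congrFun this 0)
  obtain ⟨c, hc, hc2⟩ := ennreal_c (eLpNorm f p volume) _ (f.memLp p volume).eLpNorm_ne_top hAn
  refine ⟨c, hc, fun lam hlam => ⟨f, ?_, ?_, hc2⟩⟩
  · rintro rfl
    apply hA1
    simp [avgOp]
  · apply tsupport_annulus
    intro ξ hξ
    have h1 : ‖ξ - t • w0‖ ≤ ε := by
      by_contra h
      exact hξ (hff ξ (not_le.mp h))
    have h2 : ‖t • w0‖ = t := by
      rw [norm_smul, hw0, mul_one, Real.norm_of_nonneg]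
      nlinarith [ht.1]
    have h3 := abs_norm_sub_norm_le ξ (t • w0)
    rw [h2] at h3
    have h4 := abs_le.mp (h3.trans h1)
    have := ht.1
    have := ht.2
    have := hlam.1
    have := hlam.2
    constructor <;> linarith

lemma small_lam {n : ℕ} (hn : 2 ≤ n) (p : ℝ≥0∞) (hp : 2 ≤ p) (γ : ℝ → Euc n) (hγ : Continuous γ)
    (χ : ℝ → ℝ) (hχ : Continuous χ) (hχc : HasCompactSupport χ)
    (hχpos : ∀ s, 0 ≤ χ s) (hχi : 0 < ∫ s, χ s) (S : 𝓢(Euc n, ℂ)) (φ : Euc n → ℝ) (hφc : Continuous φ)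
    (hφ : ∀ x, (𝓕⁻ S) x = (φ x : ℂ)) (hS : ∀ ξ, 1 ≤ ‖ξ‖ → S ξ = 0)
    (hφ1 : 0 < φ 0) (C₀ : ℝ) (hφb : ∀ y, |φ y| ≤ C₀) (Λ : ℝ) :
    ∃ c : ℝ, 0 < c ∧ ∀ lam ∈ Icc 1 Λ,
      ∃ f : SchwartzMap (Euc n) ℂ, f ≠ 0 ∧
        tsupport (𝓕 ⇑f) ⊆ {ξ : Euc n | lam / 2 ≤ ‖ξ‖ ∧ ‖ξ‖ ≤ 2 * lam} ∧
        ENNReal.ofReal c * eLpNorm (⇑f) p volume ≤ eLpNorm (avgOp γ χ ⇑f) p volume := by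
  refine (isCompact_Icc (a := (1 : ℝ)) (b := Λ)).induction_on (p := fun U => ∃ c : ℝ, 0 < c ∧ ∀ lam ∈ U,
      ∃ f : SchwartzMap (Euc n) ℂ, f ≠ 0 ∧
        tsupport (𝓕 ⇑f) ⊆ {ξ : Euc n | lam / 2 ≤ ‖ξ‖ ∧ ‖ξ‖ ≤ 2 * lam} ∧
        ENNReal.ofReal c * eLpNorm (⇑f) p volume ≤ eLpNorm (avgOp γ χ ⇑f) p volume) ⟨1, one_pos, by simp⟩ ?_ ?_ ?_
  · rintro U V hUV ⟨c, hc, h⟩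
    exact ⟨c, hc, fun q hq => h q (hUV hq)⟩
  · rintro U V ⟨c, hc, h⟩ ⟨d, hd, h'⟩
    refine ⟨min c d, lt_min hc hd, ?_⟩
    rintro q (hq | hq)
    · obtain ⟨f, h1, h2, h3⟩ := h q hq
      refine ⟨f, h1, h2, le_trans ?_ h3⟩
      gcongr
      exact min_le_left _ _
    · obtain ⟨f, h1, h2, h3⟩ := h' q hq
      refine ⟨f, h1, h2, le_trans ?_ h3⟩
      gcongr
      exact min_le_right _ _
  · intro l hl
    refine ⟨Ioo (l * (13 / 16)) (l * (5 / 4)), mem_nhdsWithin_of_mem_nhds (Ioo_mem_nhds ?_ ?_),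
      small_one hn p hp γ hγ χ hχ hχc hχpos hχi S φ hφc hφ hS hφ1 C₀ hφb l hl.1⟩
    · linarith [hl.1]
    · linarith [hl.1]

lemma pow_alg (c R W C Φ q u L N : ℝ) (hc : 0 < c) (hR : 0 < R) (hW : 0 < W) (hC : 0 < C) (hΦ : 0 < Φ)
    (hq0 : 0 ≤ q) (hq : q ≤ 1 / 2) (hu : 0 < u) (hL : 1 ≤ L) (hN : L ≤ N) :
    (c / R * W ^ q / (C * Φ ^ q)) * L ^ (-(1 / 2 + q)) * (C * (N * u * Φ) ^ q) ≤
      c / (R * L) * N ^ (1 / 2 : ℝ) * (u * W) ^ q := by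
  have hL0 : 0 < L := by linarith
  have hN0 : 0 < N := by linarith
  have h1 : (N * u * Φ) ^ q = N ^ q * u ^ q * Φ ^ q := by
    rw [Real.mul_rpow (by positivity) hΦ.le, Real.mul_rpow hN0.le hu.le]
  have h2 : (u * W) ^ q = u ^ q * W ^ q := Real.mul_rpow hu.le hW.le
  have h3 : N ^ (1 / 2 : ℝ) = N ^ (1 / 2 - q) * N ^ q := by
    rw [← Real.rpow_add hN0]; congr 1; ring
  have h4 : L ^ (-(1 / 2 + q)) = L ^ (1 / 2 - q) / L := by
    rw [← Real.rpow_sub_one hL0.ne']; congr 1; ring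
  have h5 : L ^ (1 / 2 - q) ≤ N ^ (1 / 2 - q) := Real.rpow_le_rpow hL0.le hN (by linarith)
  rw [h1, h2, h3, h4]
  have hΦq : 0 < Φ ^ q := Real.rpow_pos_of_pos hΦ q
  have hNq : 0 < N ^ q := Real.rpow_pos_of_pos hN0 q
  have huq : 0 < u ^ q := Real.rpow_pos_of_pos hu q
  have hWq : 0 < W ^ q := Real.rpow_pos_of_pos hW q
  calc _ = c / (R * L) * (L ^ (1 / 2 - q) * N ^ q) * (u ^ q * W ^ q) := by
        field_simp
    _ ≤ _ := by gcongr

lemma l1_bound {n : ℕ} (φ : Euc n → ℝ) (hφc : Continuous φ) (hφ0 : ∀ x, 0 ≤ φ x) (hφi : Integrable φ)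
    (ρ : ℝ) (hρ : 0 < ρ) (N : ℕ) (v : ℕ → Euc n) (g : Euc n → ℂ)
    (hg : ∀ x, ‖g x‖ ≤ ∑ k ∈ Finset.range N, φ (ρ • (x + v k))) :
    ∫⁻ x, ‖g x‖ₑ ≤ ENNReal.ofReal (N * (ρ ^ n)⁻¹ * ((∫ x, φ x) + 1)) := by
  have hi : ∀ k, Integrable (fun x => φ (ρ • (x + v k))) := fun k =>
    (hφi.comp_smul hρ.ne').comp_add_right (v k)
  have he : ∀ k, ∫ x, φ (ρ • (x + v k)) = (ρ ^ n)⁻¹ * ∫ x, φ x := by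
    intro k
    rw [integral_add_right_eq_self (fun x => φ (ρ • x)) (v k), Measure.integral_comp_smul_of_nonneg _ _ _ (hR := hρ.le)]
    simp
  have h0 : 0 ≤ ∫ x, φ x := integral_nonneg hφ0
  calc ∫⁻ x, ‖g x‖ₑ ≤ ∫⁻ x, ENNReal.ofReal (∑ k ∈ Finset.range N, φ (ρ • (x + v k))) := by
        refine lintegral_mono fun x => ?_
        rw [← ofReal_norm_eq_enorm]
        exact ENNReal.ofReal_le_ofReal (hg x)
    _ = ENNReal.ofReal (∫ x, ∑ k ∈ Finset.range N, φ (ρ • (x + v k))) := by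
        rw [ofReal_integral_eq_lintegral_ofReal (integrable_finset_sum _ fun k _ => hi k)
          (Filter.Eventually.of_forall fun x => Finset.sum_nonneg fun k _ => hφ0 _)]
    _ ≤ _ := by
        apply ENNReal.ofReal_le_ofReal
        rw [integral_finset_sum _ fun k _ => hi k]
        simp only [he, Finset.sum_const, Finset.card_range, nsmul_eq_mul]
        rw [mul_assoc]
        gcongr
        linarith

lemma avg_sum {n : ℕ} (γ : ℝ → Euc n) (hγ : Continuous γ)
    (χ : ℝ → ℝ) (hχ : Continuous χ) (hχc : HasCompactSupport χ) (N : ℕ) (f : ℕ → Euc n → ℂ)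
    (hf : ∀ k, Continuous (f k)) (ε : ℕ → ℂ) (F : Euc n → ℂ)
    (hF : ∀ x, F x = ∑ k ∈ Finset.range N, ε k * f k x) :
    avgOp γ χ F = fun x => ∑ k ∈ Finset.range N, ε k * avgOp γ χ (f k) x := by
  ext x
  simp only [avgOp, hF]
  have hi : ∀ k, Integrable (fun s => ε k * (f k (x - γ s) * (χ s : ℂ))) := by
    intro k
    have h2 : HasCompactSupport (fun s => (χ s : ℂ)) := hχc.comp_left (g := fun t : ℝ => (t : ℂ)) (by simp)
    have hk := hf k
    refine Continuous.integrable_of_hasCompactSupport (by fun_prop) ?_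
    exact (h2.mul_left (f := fun s => f k (x - γ s))).mul_left (f := fun _ => ε k)
  simp_rw [← integral_const_mul]
  rw [← integral_finset_sum _ fun k _ => hi k]
  congr 1
  ext s
  rw [Finset.sum_mul]
  refine Finset.sum_congr rfl fun k _ => ?_
  ring

lemma four_sum {n : ℕ} (N : ℕ) (f : ℕ → 𝓢(Euc n, ℂ)) (ε : ℕ → ℂ) (ξ : Euc n)
    (h : 𝓕 (⇑(∑ k ∈ Finset.range N, ε k • f k)) ξ ≠ 0) : ∃ k < N, 𝓕 (⇑(f k)) ξ ≠ 0 := by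
  by_contra! hcon
  apply h
  rw [← SchwartzMap.fourier_coe]
  have : 𝓕 (∑ k ∈ Finset.range N, ε k • f k) = ∑ k ∈ Finset.range N, ε k • 𝓕 (f k) := by
    have := map_sum (SchwartzMap.fourierTransformCLM ℂ (V := Euc n) (E := ℂ)) (fun k => ε k • f k) (Finset.range N)
    simpa using this
  rw [this, SchwartzMap.sum_apply]
  refine Finset.sum_eq_zero fun k hk => ?_
  rw [SchwartzMap.smul_apply, SchwartzMap.fourier_coe, hcon k (Finset.mem_range.mp hk), smul_zero]

lemma large_lam {n : ℕ} (hn : 2 ≤ n) (p : ℝ≥0∞) (hp : 2 ≤ p) (a b : ℝ) (γ : ℝ → Euc n) (hγ : Continuous γ)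
    (χ : ℝ → ℝ) (hχ : Continuous χ) (hχc : HasCompactSupport χ)
    (hχs : tsupport χ ⊆ Set.Ioo a b) (hχpos : ∀ s, 0 ≤ χ s)
    (s₀ η m₀ : ℝ) (hη : 0 < η) (hm₀ : 0 < m₀) (hm : ∀ s ∈ Icc s₀ (s₀ + 2 * η), m₀ ≤ χ s)
    (c₁ : ℝ) (hc₁ : 0 < c₁) (hlo : ∀ s ∈ Icc a b, ∀ t ∈ Icc a b, c₁ * |s - t| ≤ ‖γ s - γ t‖)
    (C₂ : ℝ) (hC₂ : 0 < C₂) (hup : ∀ s ∈ Icc a b, ∀ t ∈ Icc a b, ‖γ s - γ t‖ ≤ C₂ * |s - t|)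
    (M : ℝ) (hM : 0 < M)
    (hph : ∀ s₀ ∈ Icc a b, ∃ e : Euc n, ‖e‖ = 1 ∧ ∀ s ∈ Icc a b, |⟪e, γ s - γ s₀⟫| ≤ M * |s - s₀| ^ n)
    (S : 𝓢(Euc n, ℂ)) (φ : Euc n → ℝ) (hφ : ∀ x, (𝓕⁻ S) x = (φ x : ℂ)) (hS : ∀ ξ, 1 ≤ ‖ξ‖ → S ξ = 0)
    (hφc : Continuous φ) (hφ0 : ∀ x, 0 ≤ φ x) (hφ1 : 0 < φ 0) (hφi : Integrable φ)
    (C₀ : ℝ) (hC₀ : 0 < C₀) (hφd : ∀ y, φ y ≤ C₀ * ((1 + ‖y‖) ^ 3)⁻¹) (hφb : ∀ y, |φ y| ≤ C₀) :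
    ∃ c : ℝ, 0 < c ∧ ∃ Λ : ℝ, ∀ lam : ℝ, 1 ≤ lam → Λ ≤ lam →
      ∃ f : SchwartzMap (Euc n) ℂ, f ≠ 0 ∧
        tsupport (𝓕 ⇑f) ⊆ {ξ : Euc n | lam / 2 ≤ ‖ξ‖ ∧ ‖ξ‖ ≤ 2 * lam} ∧
        ENNReal.ofReal (c * lam ^ (-((1 / (n : ℝ)) * (1 / 2 + (1 / p).toReal)))) *
            eLpNorm (⇑f) p volume ≤
          eLpNorm (avgOp γ χ ⇑f) p volume := by
  obtain ⟨c, hc, r, hr, R, hR, hlow⟩ := avg_lower hn a b γ hγ χ hχ hχc hχs hχpos s₀ η m₀ hη hm₀ hm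
    c₁ hc₁ hlo C₂ hC₂ hup M hM φ hφc hφ0 hφ1 C₀ hC₀ hφd
  obtain ⟨C, hC, hsup⟩ := sum_sup φ hφ0 C₀ hC₀ hφd (c₁ * η / 2) (by positivity)
  set V1 := (volume (Metric.ball (0 : Euc n) 1)).toReal with hV1
  have hV1p : 0 < V1 := ENNReal.toReal_pos (Metric.measure_ball_pos volume _ one_pos).ne' measure_ball_lt_top.ne
  set q := (1 / p).toReal with hq
  have hq0 : 0 ≤ q := ENNReal.toReal_nonneg
  have hq2 : q ≤ 1 / 2 := by
    have : (1 / p) ≤ 1 / 2 := by gcongr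
    have := ENNReal.toReal_mono (by simp) this
    simpa [hq] using this
  have hR0 : 0 < R := by linarith
  have hΦ : 0 < (∫ x, φ x) + 1 := by
    have := integral_nonneg (μ := volume) (f := φ) hφ0
    linarith
  set Φ := (∫ x, φ x) + 1 with hΦd
  set W := r ^ n * V1 with hW
  have hWp : 0 < W := by positivity
  have hC0 : 0 < C := by linarith
  refine ⟨c / R * W ^ q / (C * Φ ^ q), by positivity, (2 * R) ^ n, fun lam hlam1 hlamΛ => ?_⟩
  have hlam0 : 0 < lam := by linarith
  set L := lam ^ (1 / (n : ℝ)) with hL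
  have hn0 : (n : ℝ) ≠ 0 := by positivity
  have hLn : L ^ n = lam := by
    rw [hL, ← Real.rpow_natCast, ← Real.rpow_mul hlam0.le, one_div_mul_cancel hn0, Real.rpow_one]
  have hL1 : 1 ≤ L := Real.one_le_rpow hlam1 (by positivity)
  have hLR : 2 * R ≤ L := by
    rw [← hLn] at hlamΛ
    exact (pow_le_pow_iff_left₀ (by positivity) (by positivity) (by omega)).mp hlamΛ
  have hL0 : 0 < L := by linarith
  have hρ2 : R * L ≤ lam / 2 := by
    have : L ^ 2 ≤ L ^ n := pow_le_pow_right₀ hL1 hn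
    nlinarith
  have hρ : 0 < R * L := by positivity
  set ρ := R * L with hρd
  set N := ⌈L⌉₊ with hN
  have hNL : L ≤ N := Nat.le_ceil _
  have hN2 : (N : ℝ) ≤ 2 * L := by
    have := (Nat.ceil_lt_add_one hL0.le).le
    linarith
  have hNp : (0 : ℝ) < N := by linarith
  let s : ℕ → ℝ := fun k => s₀ + η * min ((k : ℝ) / N) 1
  have hs : ∀ k, s k ∈ Icc s₀ (s₀ + η) := by
    intro k
    have h1 : 0 ≤ min ((k : ℝ) / N) 1 := by positivity
    have h2 : min ((k : ℝ) / N) 1 ≤ 1 := min_le_right _ _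
    constructor
    · simp only [s]; nlinarith
    · simp only [s]; nlinarith
  have hsab : ∀ k, s k ∈ Icc a b := by
    intro k
    apply Ioo_subset_Icc_self
    apply hχs
    apply subset_tsupport
    have := hm (s k) ⟨(hs k).1, by linarith [(hs k).2]⟩
    exact (lt_of_lt_of_le hm₀ this).ne'
  choose e he1 he using fun k => hph (s k) (hsab k)
  choose f hf hff using fun k => exists_mod S φ hφ hS ρ hρ (L ^ n • e k) (γ (s k))
  have hfn : ∀ k x, ‖f k x‖ = φ (ρ • (x + γ (s k))) := by
    intro k x
    rw [hf, norm_mul, Complex.norm_exp_ofReal_mul_I, one_mul, Complex.norm_real, Real.norm_of_nonneg (hφ0 _)]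
  have hfb : ∀ k x, ‖f k x‖ ≤ C₀ := by
    intro k x
    rw [hfn]
    exact (le_abs_self _).trans (hφb _)
  have hAc : ∀ k, Continuous (avgOp γ χ (f k)) := fun k =>
    (avg_continuous γ hγ χ hχ hχc (f k) (f k).continuous C₀ (hfb k)).1
  choose C' hC' using fun k => (avg_continuous γ hγ χ hχ hχc (f k) (f k).continuous C₀ (hfb k)).2
  obtain ⟨ε, hε, hεlow⟩ := norm_lower p hp N (fun k => avgOp γ χ (f k)) hAc C' hC' (r / ρ) (by positivity)
    (c / ρ) (by positivity) (fun k _ x hx => hlow L hL1 (s k) (hs k) (e k) (he k) (f k) (hf k) x hx)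
  let F : 𝓢(Euc n, ℂ) := ∑ k ∈ Finset.range N, ε k • f k
  have hF : ∀ x, F x = ∑ k ∈ Finset.range N, ε k * f k x := by
    intro x
    simp only [F, SchwartzMap.sum_apply, SchwartzMap.smul_apply, smul_eq_mul]
  rw [← avg_sum γ hγ χ hχ hχc N (fun k => f k) (fun k => (f k).continuous) ε F hF] at hεlow
  have hvol : (volume (Metric.closedBall (0 : Euc n) (r / ρ))).toReal = (ρ ^ n)⁻¹ * W := by
    rw [Measure.addHaar_closedBall _ _ (by positivity), ENNReal.toReal_mul, ENNReal.toReal_ofReal (by positivity)]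
    simp only [finrank_euclideanSpace, Fintype.card_fin]
    rw [hW, hV1, div_pow]
    ring
  rw [hvol] at hεlow
  have hFn : ∀ x, ‖F x‖ ≤ ∑ k ∈ Finset.range N, φ (ρ • (x + γ (s k))) := by
    intro x
    rw [hF]
    refine (norm_sum_le _ _).trans (Finset.sum_le_sum fun k _ => ?_)
    rw [norm_mul, hε, one_mul, hfn]
  have hspace : ∀ k < N, ∀ l < N, c₁ * η / 2 * |(k : ℝ) - l| ≤ ρ * ‖γ (s k) - γ (s l)‖ := by
    intro k hk l hl
    have hmin : ∀ j < N, s j = s₀ + η * ((j : ℝ) / N) := by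
      intro j hj
      simp only [s]
      rw [min_eq_left]
      rw [div_le_one hNp]
      exact_mod_cast hj.le
    have h1 := hlo (s k) (hsab k) (s l) (hsab l)
    have h2 : |s k - s l| = η / N * |(k : ℝ) - l| := by
      rw [hmin k hk, hmin l hl, show s₀ + η * ((k : ℝ) / N) - (s₀ + η * ((l : ℝ) / N)) = η / N * ((k : ℝ) - l) by ring,
        abs_mul, abs_of_pos (by positivity)]
    rw [h2] at h1
    have h3 : (N : ℝ) ≤ 2 * ρ := by nlinarith
    calc c₁ * η / 2 * |(k : ℝ) - l| ≤ (ρ / N) * (c₁ * η) * |(k : ℝ) - l| := by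
          have : (1 / 2 : ℝ) ≤ ρ / N := by
            rw [div_le_div_iff₀ two_pos hNp]; linarith
          have h4 : 0 ≤ c₁ * η := by positivity
          gcongr
          nlinarith
      _ = ρ * (c₁ * (η / N * |(k : ℝ) - l|)) := by ring
      _ ≤ _ := by gcongr
  have hFC : ∀ x, ‖F x‖ ≤ C := fun x => (hFn x).trans (hsup ρ hρ N (fun k => γ (s k)) hspace x)
  have hup := norm_upper p hp F C (N * (ρ ^ n)⁻¹ * Φ) hC (by positivity) hFC
    (l1_bound φ hφc hφ0 hφi ρ hρ N (fun k => γ (s k)) F hFn)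
  refine ⟨F, ?_, ?_, ?_⟩
  · intro h0
    have h1 : avgOp γ χ F = 0 := by
      ext x
      simp [h0, avgOp]
    rw [h1, eLpNorm_zero, nonpos_iff_eq_zero, ENNReal.ofReal_eq_zero] at hεlow
    have : 0 < c / ρ * (N : ℝ) ^ (1 / 2 : ℝ) * ((ρ ^ n)⁻¹ * W) ^ q := by positivity
    linarith
  · apply tsupport_annulus
    intro ξ hξ
    obtain ⟨k, -, hk⟩ := four_sum N f ε ξ hξ
    have h1 : ‖ξ - L ^ n • e k‖ ≤ ρ := by
      by_contra h
      exact hk (hff k ξ (not_le.mp h))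
    have h2 : ‖L ^ n • e k‖ = lam := by
      rw [norm_smul, he1, mul_one, hLn, Real.norm_of_nonneg hlam0.le]
    have h3 := abs_norm_sub_norm_le ξ (L ^ n • e k)
    rw [h2] at h3
    have h4 := abs_le.mp (h3.trans h1)
    constructor <;> linarith
  · refine le_trans (mul_le_mul_right hup _) (le_trans ?_ hεlow)
    rw [← ENNReal.ofReal_mul (by positivity)]
    apply ENNReal.ofReal_le_ofReal
    have h1 : lam ^ (-((1 / (n : ℝ)) * (1 / 2 + q))) = L ^ (-(1 / 2 + q)) := by
      rw [hL, ← Real.rpow_mul hlam0.le]; congr 1; ring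
    rw [h1]
    exact pow_alg c R W C Φ q (ρ ^ n)⁻¹ L N hc hR0 hWp hC0 hΦ hq0 hq2 (by positivity) hL1 hNL

/-- lower bound `sup{‖A_γ f‖_p : f ∈ Z_λ} ≳ λ^{−(1/n)(1/2+1/p)} ‖f‖_p`
for non-degenerate curves, witnessing the Fourier decay constraint. -/
theorem statement6
    (n : ℕ) (hn : 2 ≤ n)
    (p : ℝ≥0∞) (hp : 2 ≤ p)
    (a b : ℝ) (hab : a < b)
    (γ : ℝ → Euc n) (hγ : ContDiff ℝ (⊤ : ℕ∞) γ)
    (hinj : Set.InjOn γ (Set.Icc a b))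
    (hreg : ∀ s ∈ Set.Icc a b, deriv γ s ≠ 0)
    (hnd : NonDeg γ (Set.Icc a b))
    (χ : ℝ → ℝ) (hχ : ContDiff ℝ (⊤ : ℕ∞) χ) (hχc : HasCompactSupport χ)
    (hχs : tsupport χ ⊆ Set.Ioo a b)
    (hχpos : ∀ s, 0 ≤ χ s) (hχne : χ ≠ 0) :
    ∃ c : ℝ, 0 < c ∧ ∀ lam : ℝ, 1 ≤ lam →
      ∃ f : SchwartzMap (Euc n) ℂ, f ≠ 0 ∧
        tsupport (𝓕 ⇑f) ⊆ {ξ : Euc n | lam / 2 ≤ ‖ξ‖ ∧ ‖ξ‖ ≤ 2 * lam} ∧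
        ENNReal.ofReal (c * lam ^ (-((1 / (n : ℝ)) * (1 / 2 + (1 / p).toReal)))) *
            eLpNorm (⇑f) p volume ≤
          eLpNorm (avgOp γ χ ⇑f) p volume := by
  obtain ⟨S, φ, hφ, hφ0, hφ1, hS⟩ := exists_bump n
  obtain ⟨C₀, hC₀, hφd⟩ := phi_decay (𝓕⁻ S) φ hφ hφ0
  have hφre : φ = fun x => ((𝓕⁻ S) x).re := by
    ext x
    rw [hφ, Complex.ofReal_re]
  have hφc : Continuous φ := by
    rw [hφre]
    exact Complex.continuous_re.comp (𝓕⁻ S).continuous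
  have hφi : Integrable φ := by
    rw [hφre]
    exact ((𝓕⁻ S).integrable (μ := volume)).re
  have hφb : ∀ y, |φ y| ≤ C₀ := by
    intro y
    rw [abs_of_nonneg (hφ0 y)]
    refine (hφd y).trans ?_
    have : ((1 + ‖y‖) ^ 3)⁻¹ ≤ 1 := inv_le_one_of_one_le₀ (one_le_pow₀ (by linarith [norm_nonneg y]))
    nlinarith
  obtain ⟨s₀, hs₀⟩ : ∃ s₀, χ s₀ ≠ 0 := Function.ne_iff.mp hχne
  have hs₀p : 0 < χ s₀ := lt_of_le_of_ne (hχpos s₀) hs₀.symm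
  obtain ⟨η, hη, hm⟩ : ∃ η > 0, ∀ s ∈ Icc s₀ (s₀ + 2 * η), χ s₀ / 2 ≤ χ s := by
    have := hχ.continuous.continuousAt.eventually_const_lt (show χ s₀ / 2 < χ s₀ by linarith)
    rw [Metric.eventually_nhds_iff] at this
    obtain ⟨δ, hδ, h⟩ := this
    refine ⟨δ / 4, by positivity, fun s hs => (h ?_).le⟩
    rw [Real.dist_eq, abs_of_nonneg (by linarith [hs.1])]
    linarith [hs.2]
  have hχi : 0 < ∫ s, χ s := hχ.continuous.integral_pos_of_hasCompactSupport_nonneg_nonzero hχc hχpos hs₀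
  obtain ⟨c₁, hc₁, hlo⟩ := bilip a b hab γ hγ hinj hreg
  obtain ⟨C₂, hC₂, hup⟩ := uplip a b γ hγ
  obtain ⟨M, hM, hph⟩ := phase_bd hn a b γ hγ
  obtain ⟨c, hc, Λ, hbig⟩ := large_lam hn p hp a b γ hγ.continuous χ hχ.continuous hχc hχs hχpos s₀ η (χ s₀ / 2)
    hη (by positivity) hm c₁ hc₁ hlo C₂ hC₂ hup M hM hph S φ hφ hS hφc hφ0 hφ1 hφi C₀ hC₀ hφd hφb
  obtain ⟨c', hc', hsmall⟩ := small_lam hn p hp γ hγ.continuous χ hχ.continuous hχc hχpos hχi S φ hφc hφ hS hφ1 C₀ hφb Λ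
  refine ⟨min c c', lt_min hc hc', fun lam hlam => ?_⟩
  have hlam0 : 0 < lam := by linarith
  rcases le_total Λ lam with h | h
  · obtain ⟨f, h1, h2, h3⟩ := hbig lam hlam h
    refine ⟨f, h1, h2, le_trans ?_ h3⟩
    gcongr
    exact min_le_left _ _
  · obtain ⟨f, h1, h2, h3⟩ := hsmall lam ⟨hlam, h⟩
    refine ⟨f, h1, h2, le_trans ?_ h3⟩
    gcongr
    have h4 : lam ^ (-((1 / (n : ℝ)) * (1 / 2 + (1 / p).toReal))) ≤ 1 := by
      apply Real.rpow_le_one_of_one_le_of_nonpos hlam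
      have : 0 ≤ (1 / p).toReal := ENNReal.toReal_nonneg
      rw [neg_nonpos]
      positivity
    calc _ ≤ c' * 1 := by
          gcongr
          exact min_le_right _ _
      _ = c' := mul_one _
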